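/- Let ℓ ∈ X with ℓ ≥ 2n−i+2 (so ℓ ∈ Y ∖ Z) and let ℓ' ∈ Y with ℓ' ≠ ℓ. Then ℓ ≁ ℓ': there is no signed permutation of ℤ^n mapping v(ℓ') to v(ℓ). -/

import Mathlib

/-!
A signed permutation preserves the Euclidean norm. The first `n - i` entries of `v(s)` do not
depend on `s`, and summing over the last `i` entries gives
`‖v(ℓ)‖² - ‖v(ℓ')‖² = i (ℓ - ℓ') (ℓ + ℓ' - (2n - i + 1))`.
So `ℓ ∼ ℓ'` with `ℓ ≠ ℓ'` forces `ℓ + ℓ' = 2n - i + 1`, which is impossible when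
`ℓ ≥ 2n - i + 2` and `ℓ' ≥ 0`.
-/

/-- The Harish-Chandra parameter `v(s) ∈ ℤ^n` of the induced representation
`I_{P_{i,n}}(s, μ, L(λ_1, …, λ_{n-i}))`: its `k`-th entry (with `k : Fin n`,
`0`-based) is `λ_{k+1} - (k+1)` for `k + 1 ≤ n - i` and `s - (k+1)` otherwise. -/
def HCparam (n i : ℕ) (lam : Fin (n - i) → ℤ) (s : ℤ) (k : Fin n) : ℤ :=
  if h : (k : ℕ) < n - i then lam ⟨(k : ℕ), h⟩ - ((k : ℤ) + 1) else s - ((k : ℤ) + 1)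

/-- `s ∼ s'` : some signed permutation of `ℤ^n` (an element of the Weyl group of
type `C_n`, given by a permutation `σ` and signs `ε ∈ {±1}^n`) maps `v(s)` to
`v(s')`. -/
def HCrel (n i : ℕ) (lam : Fin (n - i) → ℤ) (s s' : ℤ) : Prop :=
  ∃ (σ : Equiv.Perm (Fin n)) (ε : Fin n → ℤ),
    (∀ j : Fin n, ε j = 1 ∨ ε j = -1) ∧
    ∀ j : Fin n, HCparam n i lam s' j = ε j * HCparam n i lam s (σ j)

theorem sum_tail_eq (m i : ℕ) (c : ℤ) :
    ∑ k ∈ Finset.range (m + i), (if k < m then 0 else c - 2 * ((k : ℤ) + 1)) =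
      i * (c - (2 * m + i + 1)) := by
  induction i with
  | zero =>
    simp only [Nat.add_zero, Nat.cast_zero, zero_mul]
    exact Finset.sum_eq_zero fun k hk => if_pos (Finset.mem_range.mp hk)
  | succ j ih =>
    rw [← Nat.add_assoc, Finset.sum_range_succ, ih, if_neg (by omega)]
    push_cast
    ring

theorem sum_sq_HCparam_sub (n i : ℕ) (hi : i ≤ n) (lam : Fin (n - i) → ℤ) (s t : ℤ) :
    ∑ k, HCparam n i lam s k ^ 2 - ∑ k, HCparam n i lam t k ^ 2 =
      (s - t) * (i * (s + t - (2 * n - i + 1))) := by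
  have hterm : ∀ k : Fin n, HCparam n i lam s k ^ 2 - HCparam n i lam t k ^ 2 =
      (s - t) * (if (k : ℕ) < n - i then 0 else (s + t) - 2 * (((k : ℕ) : ℤ) + 1)) := by
    intro k
    unfold HCparam
    split_ifs <;> ring
  have htail := sum_tail_eq (n - i) i (s + t)
  rw [Nat.sub_add_cancel hi, Nat.cast_sub hi] at htail
  rw [← Finset.sum_sub_distrib, Finset.sum_congr rfl fun k _ => hterm k, ← Finset.mul_sum,
    Fin.sum_univ_eq_sum_range
      (fun k : ℕ => if k < n - i then (0 : ℤ) else (s + t) - 2 * ((k : ℤ) + 1)) n, htail]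
  ring

theorem HCrel.sum_sq_eq {n i : ℕ} {lam : Fin (n - i) → ℤ} {s t : ℤ} (h : HCrel n i lam s t) :
    ∑ k, HCparam n i lam t k ^ 2 = ∑ k, HCparam n i lam s k ^ 2 := by
  obtain ⟨σ, ε, hε, h⟩ := h
  rw [← Equiv.sum_comp σ fun k => HCparam n i lam s k ^ 2]
  refine Finset.sum_congr rfl fun j _ => ?_
  rw [h j]
  rcases hε j with hj | hj <;> rw [hj] <;> ring

/-- Let `X = {0, …, λ_{n-i}}`, `Z = {x ∈ X : 2x ≤ 2n - i + 1}` and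
`Y = Z ∪ {x ∈ X : x ≥ 2n - i + 2}`.  If `ℓ ∈ X` satisfies `ℓ ≥ 2n - i + 2`
(so `ℓ ∈ Y ∖ Z`), and `ℓ' ∈ Y` with `ℓ' ≠ ℓ`, then `ℓ ≁ ℓ'`: no signed
permutation of `ℤ^n` maps `v(ℓ')` to `v(ℓ)`. -/
theorem dot_orbit_large_not_equiv
    (n i : ℕ) (hi1 : 1 ≤ i) (hi2 : i < n)
    (lam : Fin (n - i) → ℤ)
    (hmono : ∀ p q : Fin (n - i), p ≤ q → lam q ≤ lam p)
    (hpos : 0 ≤ lam ⟨n - i - 1, by omega⟩)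
    (ℓ ℓ' : ℤ)
    (hℓX : ℓ ∈ Set.Icc (0 : ℤ) (lam ⟨n - i - 1, by omega⟩))
    (hℓ : 2 * (n : ℤ) - (i : ℤ) + 2 ≤ ℓ)
    (hℓ'X : ℓ' ∈ Set.Icc (0 : ℤ) (lam ⟨n - i - 1, by omega⟩))
    (hℓ'Y : 2 * ℓ' ≤ 2 * (n : ℤ) - (i : ℤ) + 1 ∨ 2 * (n : ℤ) - (i : ℤ) + 2 ≤ ℓ')
    (hne : ℓ' ≠ ℓ) :
    ¬ HCrel n i lam ℓ' ℓ := by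
  intro h
  have hdiff := sum_sq_HCparam_sub n i hi2.le lam ℓ ℓ'
  rw [h.sum_sq_eq, sub_self] at hdiff
  have hℓ'0 : 0 ≤ ℓ' := hℓ'X.1
  rcases mul_eq_zero.mp hdiff.symm with h0 | h0
  · omega
  · rcases mul_eq_zero.mp h0 with h1 | h1 <;> omega
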